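/- arXiv:2605.00463 — 2 statements merged into one kernel-verified Lean document; each statement's English description precedes it below -/
import Mathlib

section
/- Let k be a field, n ∈ ℕ, and let S be a k-subalgebra of the polynomial ring k[x₁,…,xₙ] generated by a (possibly infinite) set of monomials, i.e., S = Algebra.adjoin k G where every element of G is of the form monomial α 1 for some exponent vector α ∈ ℕⁿ. Grade S by S_m = S ∩ (homogeneous polynomials of total degree m), a k-submodule of S. Then S is a Hilbert–Serre ring and dim(S) = trdeg_k(S) = d(S): the Krull dimension of S, the transcendence degree of S over k, and the Hilbert–Serre dimension of S all coincide. -/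
set_option maxHeartbeats 1000000
set_option synthInstance.maxHeartbeats 400000

/-- The boundedness condition defining Hilbert–Serre rings: for all `t ∈ (0,1)` the
Poincaré series `∑ F n * tⁿ` converges and `(1 - t) ^ d` times its sum is bounded by a
uniform constant `C > 0`. -/
def HSBound (F : ℕ → ℕ) (d : ℕ) : Prop :=
  ∃ C : ℝ, 0 < C ∧ ∀ t : ℝ, t ∈ Set.Ioo (0 : ℝ) 1 →
    Summable (fun n => (F n : ℝ) * t ^ n) ∧
      (1 - t) ^ d * (∑' n, (F n : ℝ) * t ^ n) ≤ C

/-- The transcendence degree of a commutative `k`-algebra `R`: the supremum of the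
cardinalities of subsets of `R` that are algebraically independent over `k`. -/
noncomputable def trdeg (k : Type*) (R : Type*) [CommRing k] [CommRing R] [Algebra k R] :
    Cardinal :=
  ⨆ s : {s : Set R // AlgebraicIndependent k ((↑) : s → R)}, Cardinal.mk s.1

/-!
Let `M` be the monoid of exponents of the monomials in `S`, and let `J` be a minimal set of
coordinates that separates the points of `M`; put `r = |J|`. The equality of the three dimensions
comes from a cycle of inequalities

  `r ≤ dim S ≤ trdeg S ≤ d` for every `d` with `HSBound F d`, and `HSBound F r`.

* For `T ⊆ J` the kernel of the specialization `xᵢ ↦ 1` (`i ∉ T`) on `S` is a prime ideal, and by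
  minimality of `J` it strictly decreases with `T`; a maximal flag of subsets of `J` thus gives a
  chain of primes of length `r`.
* In a chain of primes `P₀ < ⋯ < P_l`, an element of `P_{i+1}` outside `P_i` is transcendental over
  any lift to `S ⧸ P_i` of an algebraically independent family in `S ⧸ P_{i+1}`.
* `HSBound F d` holds iff `F 0 + ⋯ + F n = O(n ^ d)`. If `S` contains `s` algebraically independent
  elements whose degrees sum to `D`, their monomials with exponents at most `n` are `(n + 1) ^ s`
  linearly independent elements of degree at most `D n`, so `s ≤ d`.
* The elements of `M` of degree at most `n` are determined by `r` entries from `{0, …, n}`, which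
  bounds the partial sums of `F` by `(n + 1) ^ r`.
-/

open MvPolynomial

/-! ### Poincaré series and partial sums -/

lemma tsum_mul_inv_one_sub {a : ℕ → ℝ} {t : ℝ} (ha : Summable fun n ↦ ‖a n * t ^ n‖)
    (ht : ‖t‖ < 1) :
    (∑' n, a n * t ^ n) * (1 - t)⁻¹ = ∑' n, (∑ m ∈ Finset.range (n + 1), a m) * t ^ n := by
  rw [← tsum_geometric_of_norm_lt_one ht,
    tsum_mul_tsum_eq_tsum_sum_range_of_summable_norm ha (summable_norm_geometric_of_norm_lt_one ht)]
  refine tsum_congr fun n ↦ ?_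
  rw [Finset.sum_mul]
  refine Finset.sum_congr rfl fun m hm ↦ ?_
  rw [mul_assoc, ← pow_add, Nat.add_sub_cancel' (Finset.mem_range_succ_iff.1 hm)]

lemma succ_pow_le_factorial_mul_choose (n d : ℕ) :
    (n + 1) ^ d ≤ d.factorial * (n + d).choose d :=
  (Nat.pow_succ_le_ascFactorial (n + 1) d).trans_eq (Nat.ascFactorial_eq_factorial_mul_choose n d)

lemma HSBound.of_sum_le {F : ℕ → ℕ} {d : ℕ} {C : ℝ}
    (hF : ∀ n : ℕ, ((∑ m ∈ Finset.range (n + 1), F m : ℕ) : ℝ) ≤ C * (n + 1 : ℝ) ^ d) :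
    HSBound F d := by
  have hC : 0 ≤ C := by simpa using (Nat.cast_nonneg _).trans (hF 0)
  have hFchoose (n : ℕ) : ((∑ m ∈ Finset.range (n + 1), F m : ℕ) : ℝ) ≤
      C * d.factorial * (n + d).choose d := by
    rw [mul_assoc]
    exact (hF n).trans (by gcongr; exact_mod_cast succ_pow_le_factorial_mul_choose n d)
  refine ⟨C * d.factorial + 1, by positivity, fun t ⟨ht0, ht1⟩ ↦ ?_⟩
  have ht : ‖t‖ < 1 := by rwa [Real.norm_of_nonneg ht0.le]
  have hbinom := (hasSum_choose_mul_geometric_of_norm_lt_one d ht).mul_left (C * d.factorial)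
  have hsum : Summable fun n ↦ ((∑ m ∈ Finset.range (n + 1), F m : ℕ) : ℝ) * t ^ n :=
    hbinom.summable.of_nonneg_of_le (fun n ↦ by positivity) fun n ↦ by
      rw [← mul_assoc]; gcongr; exact hFchoose n
  have hP : Summable fun n ↦ (F n : ℝ) * t ^ n :=
    hsum.of_nonneg_of_le (fun n ↦ by positivity) fun n ↦ by
      gcongr; exact Finset.single_le_sum_of_canonicallyOrdered (Finset.self_mem_range_succ n)
  refine ⟨hP, ?_⟩
  have : 0 < 1 - t := sub_pos.2 ht1
  have hle : (∑' n, (F n : ℝ) * t ^ n) * (1 - t)⁻¹ ≤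
      C * d.factorial * (1 / (1 - t) ^ (d + 1)) := by
    rw [tsum_mul_inv_one_sub hP.norm ht]
    refine hasSum_le (fun n ↦ ?_) (by simpa using hsum.hasSum) hbinom
    rw [← mul_assoc]; gcongr; exact_mod_cast hFchoose n
  calc (1 - t) ^ d * ∑' n, (F n : ℝ) * t ^ n
      = (1 - t) ^ (d + 1) * ((∑' n, (F n : ℝ) * t ^ n) * (1 - t)⁻¹) := by
        rw [pow_succ]; field_simp
    _ ≤ (1 - t) ^ (d + 1) * (C * d.factorial * (1 / (1 - t) ^ (d + 1))) := by gcongr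
    _ = C * d.factorial := by field_simp
    _ ≤ C * d.factorial + 1 := by linarith

lemma HSBound.exists_sum_le {F : ℕ → ℕ} {d : ℕ} (hF : HSBound F d) :
    ∃ C : ℝ, ∀ n : ℕ, ((∑ m ∈ Finset.range (n + 1), F m : ℕ) : ℝ) ≤ C * (n + 1 : ℝ) ^ d := by
  obtain ⟨C, -, hC⟩ := hF
  refine ⟨C * 2 ^ (d + 1), fun n ↦ ?_⟩
  -- Evaluate at `t = 1 - u`: by Bernoulli, `t ^ m ≥ 1 / 2` for all `m ≤ n`.
  set u : ℝ := 1 / (2 * (n + 1)) with hu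
  have hu0 : 0 < u := by positivity
  have hu1 : u ≤ 1 / 2 := one_div_le_one_div_of_le two_pos (by linarith [n.cast_nonneg (α := ℝ)])
  obtain ⟨hsum, hle⟩ := hC (1 - u) ⟨by linarith, by linarith⟩
  rw [sub_sub_cancel] at hle
  have hnu : n * u ≤ 1 / 2 := by
    rw [hu, mul_one_div, div_le_div_iff₀ (by positivity) two_pos]; linarith
  have hbernoulli : 1 / 2 ≤ (1 - u) ^ n := by
    have := one_add_mul_le_pow (a := -u) (by linarith) n
    rw [← sub_eq_add_neg] at this
    linarith
  have hpartial : ((∑ m ∈ Finset.range (n + 1), F m : ℕ) : ℝ) * (1 / 2) ≤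
      ∑' m, (F m : ℝ) * (1 - u) ^ m := by
    refine le_trans ?_ (hsum.sum_le_tsum (Finset.range (n + 1)) fun m _ ↦ mul_nonneg
      (Nat.cast_nonneg _) (pow_nonneg (by linarith) m))
    rw [Nat.cast_sum, Finset.sum_mul]
    refine Finset.sum_le_sum fun m hm ↦ mul_le_mul_of_nonneg_left ?_ (Nat.cast_nonneg _)
    exact hbernoulli.trans (pow_le_pow_of_le_one (by linarith) (by linarith)
      (Finset.mem_range_succ_iff.1 hm))
  have hbound : u ^ d * (((∑ m ∈ Finset.range (n + 1), F m : ℕ) : ℝ) * (1 / 2)) ≤ C :=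
    (mul_le_mul_of_nonneg_left hpartial (by positivity)).trans hle
  have hinv : u ^ d * (2 * (n + 1)) ^ d = 1 := by
    rw [← mul_pow, hu, one_div_mul_cancel (by positivity), one_pow]
  calc ((∑ m ∈ Finset.range (n + 1), F m : ℕ) : ℝ)
      = u ^ d * (((∑ m ∈ Finset.range (n + 1), F m : ℕ) : ℝ) * (1 / 2)) *
          (2 * (2 * (n + 1)) ^ d) := by
        linear_combination (-((∑ m ∈ Finset.range (n + 1), F m : ℕ) : ℝ)) * hinv
    _ ≤ C * (2 * (2 * (n + 1)) ^ d) := by gcongr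
    _ = C * 2 ^ (d + 1) * (n + 1) ^ d := by rw [mul_pow]; ring

lemma le_of_forall_succ_pow_le {r d D : ℕ} {C : ℝ}
    (h : ∀ n : ℕ, (n + 1 : ℝ) ^ r ≤ C * (D * n + 1) ^ d) : r ≤ d := by
  by_contra! hdr
  have hC : 0 ≤ C := zero_le_one.trans (by simpa using h 0)
  obtain ⟨n, hn⟩ := exists_nat_gt (C * (D + 1) ^ d)
  have hpow : (n + 1 : ℝ) ^ d * (n + 1) ≤ (n + 1) ^ d * (C * (D + 1) ^ d) :=
    calc (n + 1 : ℝ) ^ d * (n + 1) ≤ (n + 1 : ℝ) ^ r := by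
          rw [← pow_succ]; exact pow_le_pow_right₀ (by linarith [n.cast_nonneg (α := ℝ)]) hdr
      _ ≤ C * (D * n + 1) ^ d := h n
      _ ≤ C * ((D + 1) * (n + 1)) ^ d := by
          gcongr; nlinarith [D.cast_nonneg (α := ℝ), n.cast_nonneg (α := ℝ)]
      _ = (n + 1) ^ d * (C * (D + 1) ^ d) := by rw [mul_pow]; ring
  linarith [le_of_mul_le_mul_left hpow (by positivity)]

/-! ### Chains of primes and transcendence degree -/

lemma algebraicIndependent_option_elim_of_comp {R A B ι : Type*} [CommRing R]
    [CommRing A] [IsDomain A] [CommRing B] [Algebra R A] [Algebra R B] {f : A →ₐ[R] B} {x : ι → A}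
    (hx : AlgebraicIndependent R (f ∘ x)) {a : A} (ha : a ≠ 0) (hfa : f a = 0) :
    AlgebraicIndependent R (fun o : Option ι ↦ o.elim a x) := by
  refine AlgebraicIndependent.option_iff.2 ⟨hx.of_comp f, fun halg ↦ ?_⟩
  refine Ideal.comap_ne_bot_of_algebraic_mem (I := RingHom.ker f) ha hfa halg ?_
  rw [eq_bot_iff]
  rintro ⟨b, hb⟩ (hfb : f b = 0)
  rw [Algebra.adjoin_range_eq_range_aeval] at hb
  obtain ⟨p, rfl⟩ := hb
  have hp : aeval (f ∘ x) p = 0 := by rw [← hfb]; exact (comp_aeval_apply x f p).symm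
  obtain rfl : p = 0 := (map_eq_zero_iff _ hx).1 hp
  exact (Submodule.mem_bot _).2 (Subtype.ext (map_zero _))

lemma exists_algebraicIndependent_quotient_head (k : Type*) {R : Type*} [Field k] [CommRing R]
    [Algebra k R] (p : LTSeries (PrimeSpectrum R)) :
    ∃ x : Fin p.length → R ⧸ p.head.asIdeal, AlgebraicIndependent k x := by
  induction p using RelSeries.inductionOn with
  | singleton P =>
    have : IsEmpty (Fin (RelSeries.singleton {(a, b) : PrimeSpectrum R × _ | a < b} P).length) :=
      Fin.isEmpty
    exact ⟨isEmptyElim, algebraicIndependent_empty_type_iff.2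
      (FaithfulSMul.algebraMap_injective k (R ⧸ P.asIdeal))⟩
  | cons p P hP ih =>
    obtain ⟨y, hy⟩ := ih
    have hlt : P.asIdeal < p.head.asIdeal := hP
    rw [RelSeries.head_cons]
    let f := Ideal.Quotient.factorₐ k hlt.le
    obtain ⟨x, rfl⟩ : ∃ x, f ∘ x = y :=
      (Ideal.Quotient.factor_surjective hlt.le).comp_left y
    obtain ⟨a, haQ, haP⟩ := SetLike.exists_of_lt hlt
    have hindep := algebraicIndependent_option_elim_of_comp hy (a := Ideal.Quotient.mk P.asIdeal a)
      (mt Ideal.Quotient.eq_zero_iff_mem.1 haP) (Ideal.Quotient.eq_zero_iff_mem.2 haQ)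
    exact ⟨_, hindep.comp _
      ((finCongr (p.cons_length P hP)).trans (_root_.finSuccEquiv p.length)).injective⟩

theorem ringKrullDim_le_toENat_trdeg (k R : Type*) [Field k] [CommRing R] [Algebra k R] :
    ringKrullDim R ≤ (Cardinal.toENat (Algebra.trdeg k R) : WithBot ℕ∞) := by
  refine iSup_le fun p ↦ WithBot.coe_le_coe.2 ?_
  obtain ⟨y, hy⟩ := exists_algebraicIndependent_quotient_head k p
  obtain ⟨x, rfl⟩ : ∃ x, Ideal.Quotient.mkₐ k p.head.asIdeal ∘ x = y :=
    (Ideal.Quotient.mkₐ_surjective k _).comp_left y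
  exact Cardinal.natCast_le_toENat.2 (by simpa using (hy.of_comp _).lift_cardinalMk_le_trdeg)

lemma natCard_le_krullDim_set (ι : Type*) [Finite ι] :
    (Nat.card ι : WithBot ℕ∞) ≤ Order.krullDim (Set ι) := by
  let e := Finite.equivFin ι
  let f : Fin (Nat.card ι + 1) → Set ι := fun n ↦ {i | (e i).castSucc < n}
  have hf : StrictMono f := Fin.strictMono_iff_lt_succ.2 fun n ↦
    ⟨fun i (hi : _ < _) ↦ hi.trans n.castSucc_lt_succ, fun h ↦ by
      simpa [f] using h (show (e (e.symm n)).castSucc < n.succ by simp)⟩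
  exact Order.LTSeries.length_le_krullDim (LTSeries.mk _ f hf)

/-! ### Minimal separating sets and specializations -/

/-- `J` separates `M`: an exponent vector in `M` is determined by its entries indexed by `J`. -/
def SeparatesExponents {σ : Type*} (J : Set σ) (M : Set (σ →₀ ℕ)) : Prop :=
  ∀ α ∈ M, ∀ β ∈ M, Set.EqOn α β J → α = β

lemma exists_minimal_separatesExponents {σ : Type*} [Finite σ] (M : Set (σ →₀ ℕ)) :
    ∃ J, Minimal (SeparatesExponents · M) J :=
  exists_minimal_of_wellFoundedLT _ ⟨Set.univ, fun _ _ _ _ h ↦ DFunLike.ext _ _ fun _ ↦ h trivial⟩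

lemma exists_eqOn_diff_singleton_of_minimal {σ : Type*} {J : Set σ} {M : Set (σ →₀ ℕ)}
    (hJ : Minimal (SeparatesExponents · M) J) {i : σ} (hi : i ∈ J) :
    ∃ α ∈ M, ∃ β ∈ M, Set.EqOn α β (J \ {i}) ∧ α i ≠ β i := by
  have hnot : ¬ SeparatesExponents (J \ {i}) M :=
    hJ.not_prop_of_lt (Set.sdiff_singleton_ssubset.2 hi)
  simp only [SeparatesExponents, not_forall] at hnot
  obtain ⟨α, hα, β, hβ, heq, hne⟩ := hnot
  refine ⟨α, hα, β, hβ, heq, fun hi' ↦ hne (hJ.prop α hα β hβ fun j hj ↦ ?_)⟩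
  obtain rfl | hji := eq_or_ne j i
  exacts [hi', heq ⟨hj, hji⟩]

section Specialization

variable {σ : Type*} (R : Type*) [CommRing R]

open scoped Classical in
/-- The specialization `xᵢ ↦ 1` for `i ∉ T`, as an endomorphism of the polynomial ring; on
exponents it keeps the entries indexed by `T`. -/
noncomputable def specializeOneCompl (T : Set σ) : MvPolynomial σ R →ₐ[R] MvPolynomial σ R :=
  AddMonoidAlgebra.mapDomainAlgHom R R (Finsupp.filterAddHom (· ∈ T))

open scoped Classical in
lemma specializeOneCompl_monomial (T : Set σ) (α : σ →₀ ℕ) (r : R) :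
    specializeOneCompl R T (monomial α r) = monomial (α.filter (· ∈ T)) r :=
  AddMonoidAlgebra.mapDomain_single

lemma specializeOneCompl_comp {T T' : Set σ} (h : T ⊆ T') :
    (specializeOneCompl R T).comp (specializeOneCompl R T') = specializeOneCompl R T := by
  classical
  refine algHom_ext fun i ↦ ?_
  simp only [AlgHom.comp_apply, X, specializeOneCompl_monomial]
  congr 2
  ext j
  by_cases hj : j ∈ T
  · simp only [Finsupp.filter_apply, hj, h hj, if_true]
  · simp only [Finsupp.filter_apply, hj, if_false]

lemma specializeOneCompl_monomial_eq_iff [Nontrivial R] {T : Set σ} {α β : σ →₀ ℕ} :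
    specializeOneCompl R T (monomial α 1) = specializeOneCompl R T (monomial β 1) ↔
      Set.EqOn α β T := by
  classical
  rw [specializeOneCompl_monomial, specializeOneCompl_monomial,
    (monomial_left_injective one_ne_zero).eq_iff]
  refine ⟨fun h i hi ↦ ?_, fun h ↦ Finsupp.ext fun i ↦ ?_⟩
  · simpa only [Finsupp.filter_apply, hi, if_true] using DFunLike.congr_fun h i
  · by_cases hi : i ∈ T
    · simp only [Finsupp.filter_apply, hi, if_true, h hi]
    · simp only [Finsupp.filter_apply, hi, if_false]

variable {R} {A : Subalgebra R (MvPolynomial σ R)} {M : Set (σ →₀ ℕ)} {J : Set σ}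

lemma ker_specializeOneCompl_lt [Nontrivial R]
    (hA : restrictSupport R M ≤ Subalgebra.toSubmodule A)
    (hJ : Minimal (SeparatesExponents · M) J) {T T' : Set σ} (hTT' : T ⊂ T') (hT' : T' ⊆ J) :
    RingHom.ker ((specializeOneCompl R T').comp A.val) <
      RingHom.ker ((specializeOneCompl R T).comp A.val) := by
  refine SetLike.lt_iff_le_and_exists.2 ⟨fun x hx ↦ ?_, ?_⟩
  · rw [RingHom.mem_ker, ← specializeOneCompl_comp R hTT'.subset]
    exact (congrArg (specializeOneCompl R T) hx).trans (map_zero _)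
  · obtain ⟨i, hiT', hiT⟩ := Set.exists_of_ssubset hTT'
    obtain ⟨α, hα, β, hβ, heq, hne⟩ := exists_eqOn_diff_singleton_of_minimal hJ (hT' hiT')
    have heqT : Set.EqOn α β T := heq.mono (Set.subset_sdiff_singleton (hTT'.subset.trans hT') hiT)
    have hmem {γ : σ →₀ ℕ} (hγ : γ ∈ M) : monomial γ 1 ∈ A :=
      hA ((monomial_mem_restrictSupport R).2 (.inl hγ))
    refine ⟨⟨monomial α 1, hmem hα⟩ - ⟨monomial β 1, hmem hβ⟩,
      (RingHom.sub_mem_ker_iff _).2 ((specializeOneCompl_monomial_eq_iff R).2 heqT),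
      fun hx ↦ hne ?_⟩
    exact (specializeOneCompl_monomial_eq_iff R).1 ((RingHom.sub_mem_ker_iff _).1 hx) hiT'

lemma natCard_le_ringKrullDim_of_minimal [IsDomain R] [Finite J]
    (hA : restrictSupport R M ≤ Subalgebra.toSubmodule A)
    (hJ : Minimal (SeparatesExponents · M) J) :
    (Nat.card J : WithBot ℕ∞) ≤ ringKrullDim A := by
  let P (T : Set J) : PrimeSpectrum A :=
    ⟨RingHom.ker ((specializeOneCompl R ((↑) '' T)).comp A.val), RingHom.ker_isPrime _⟩
  have hP : StrictMono (P ∘ OrderDual.ofDual) := fun T' T hTT' ↦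
    ker_specializeOneCompl_lt hA hJ (Subtype.val_injective.image_strictMono hTT')
      (Subtype.coe_image_subset J _)
  calc (Nat.card J : WithBot ℕ∞) ≤ Order.krullDim (Set J) := natCard_le_krullDim_set J
    _ = Order.krullDim (Set J)ᵒᵈ := Order.krullDim_orderDual.symm
    _ ≤ ringKrullDim A := Order.krullDim_le_of_strictMono _ hP

end Specialization

/-! ### Counting exponents -/

lemma finrank_restrictSupport {σ R : Type*} [CommRing R] [Nontrivial R] (s : Set (σ →₀ ℕ)) :
    Module.finrank R (restrictSupport R s) = s.ncard :=
  Module.finrank_eq_nat_card_basis (basisRestrictSupport R s)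

lemma ncard_setOf_forall_le (ι : Type*) [Finite ι] (n : ℕ) :
    {c : ι →₀ ℕ | ∀ i, c i ≤ n}.ncard = (n + 1) ^ Nat.card ι := by
  calc {c : ι →₀ ℕ | ∀ i, c i ≤ n}.ncard = Nat.card (ι → Set.Iic n) :=
        Nat.card_congr ((Finsupp.equivFunOnFinite.subtypeEquiv fun _ ↦ Iff.rfl).trans
          (Equiv.subtypePiEquivPi (p := fun _ ↦ (· ≤ n))))
    _ = (n + 1) ^ Nat.card ι := by
      simp [Nat.card_fun]

/-- The number of exponent vectors in `M` of total degree `m`, i.e. the Hilbert function of a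
monomial algebra with exponent set `M`. -/
noncomputable def exponentCount {σ : Type*} (M : Set (σ →₀ ℕ)) (m : ℕ) : ℕ :=
  {α ∈ M | α.degree = m}.ncard

lemma sum_exponentCount {σ : Type*} [Finite σ] (M : Set (σ →₀ ℕ)) (n : ℕ) :
    ∑ m ∈ Finset.range (n + 1), exponentCount M m = {α ∈ M | α.degree ≤ n}.ncard := by
  classical
  have hfin : {α ∈ M | α.degree ≤ n}.Finite := (Finsupp.finite_of_degree_le n).subset fun _ h ↦ h.2
  have hmaps : Set.MapsTo Finsupp.degree (hfin.toFinset : Set (σ →₀ ℕ)) (Finset.range (n + 1)) :=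
    fun α hα ↦ Finset.mem_range_succ_iff.2 (hfin.mem_toFinset.1 hα).2
  rw [Set.ncard_eq_toFinset_card _ hfin, Finset.card_eq_sum_card_fiberwise hmaps]
  refine Finset.sum_congr rfl fun m hm ↦ ?_
  rw [exponentCount, ← Set.ncard_coe_finset]
  congr 1
  ext α
  have := Finset.mem_range_succ_iff.1 hm
  simp only [Set.mem_ofPred_eq, Finset.coe_filter, Set.Finite.mem_toFinset, and_assoc]
  refine and_congr_right fun _ ↦ ⟨fun h ↦ ⟨h.trans_le this, h⟩, And.right⟩

lemma SeparatesExponents.ncard_degree_le {σ : Type*} {J : Set σ} [Finite J] {M : Set (σ →₀ ℕ)}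
    (hJ : SeparatesExponents J M) (n : ℕ) :
    {α ∈ M | α.degree ≤ n}.ncard ≤ (n + 1) ^ Nat.card J := by
  rw [← ncard_setOf_forall_le]
  refine Set.ncard_le_ncard_of_injOn (Finsupp.subtypeDomain (· ∈ J))
    (fun α hα i ↦ (Finsupp.le_degree _ α).trans hα.2)
    (fun α hα β hβ h ↦ hJ α hα.1 β hβ.1 fun i hi ↦ DFunLike.congr_fun h ⟨i, hi⟩) ?_
  exact Set.finite_of_ncard_pos (by rw [ncard_setOf_forall_le]; positivity)

/-! ### Growth and transcendence degree -/

lemma totalDegree_aeval_monomial_le {R σ ι : Type*} [CommSemiring R] [Fintype ι]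
    (x : ι → MvPolynomial σ R) {c : ι →₀ ℕ} {n : ℕ} (hc : ∀ i, c i ≤ n) :
    (aeval x (monomial c (1 : R))).totalDegree ≤ (∑ i, (x i).totalDegree) * n := by
  rw [aeval_monomial, map_one, one_mul, Finsupp.prod_fintype _ _ fun _ ↦ pow_zero _,
    Finset.sum_mul]
  refine (totalDegree_finsetProd _ _).trans (Finset.sum_le_sum fun i _ ↦ ?_)
  rw [mul_comm]
  exact (totalDegree_pow _ _).trans (Nat.mul_le_mul_right _ (hc i))

lemma mem_restrictSupport_degree_le {R σ : Type*} [CommSemiring R] {M : Set (σ →₀ ℕ)} {n : ℕ}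
    {p : MvPolynomial σ R} (hM : p ∈ restrictSupport R M) (hn : p.totalDegree ≤ n) :
    p ∈ restrictSupport R {α ∈ M | α.degree ≤ n} :=
  (mem_restrictSupport_iff R).2 fun _ hα ↦ ⟨hM hα, (le_totalDegree hα).trans hn⟩

lemma exists_forall_succ_pow_le_ncard {R σ ι : Type*} [CommRing R] [Nontrivial R]
    [Finite σ] [Finite ι]
    {S : Subalgebra R (MvPolynomial σ R)} {M : Set (σ →₀ ℕ)}
    (hS : Subalgebra.toSubmodule S ≤ restrictSupport R M) {x : ι → S}
    (hx : AlgebraicIndependent R x) :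
    ∃ D, ∀ n, (n + 1) ^ Nat.card ι ≤ {α ∈ M | α.degree ≤ D * n}.ncard := by
  have := Fintype.ofFinite ι
  let D := ∑ i, (x i : MvPolynomial σ R).totalDegree
  refine ⟨D, fun n ↦ ?_⟩
  let φ := (S.val.comp (aeval x)).toLinearMap
  have hφ : Function.Injective φ := Subtype.val_injective.comp hx
  have hmap : (restrictSupport R {c : ι →₀ ℕ | ∀ i, c i ≤ n}).map φ ≤
      restrictSupport R {α ∈ M | α.degree ≤ D * n} := by
    rw [restrictSupport_eq_span, Submodule.map_span_le]
    rintro _ ⟨c, hc, rfl⟩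
    refine mem_restrictSupport_degree_le (hS (aeval x (monomial c 1)).2) ?_
    have hφc : φ (monomial c 1) = aeval (fun i ↦ (x i : MvPolynomial σ R)) (monomial c (1 : R)) :=
      comp_aeval_apply x S.val _
    exact (congrArg totalDegree hφc).trans_le (totalDegree_aeval_monomial_le _ hc)
  have : Finite {α ∈ M | α.degree ≤ D * n} :=
    (Finsupp.finite_of_degree_le (D * n)).subset fun _ h ↦ h.2
  have : Module.Finite R (restrictSupport R {α ∈ M | α.degree ≤ D * n}) :=
    .of_basis (basisRestrictSupport R _)
  calc (n + 1) ^ Nat.card ι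
      = Module.finrank R (restrictSupport R {c : ι →₀ ℕ | ∀ i, c i ≤ n}) := by
        rw [finrank_restrictSupport, ncard_setOf_forall_le]
    _ = Module.finrank R ((restrictSupport R {c : ι →₀ ℕ | ∀ i, c i ≤ n}).map φ) :=
        (Submodule.equivMapOfInjective φ hφ _).finrank_eq
    _ ≤ Module.finrank R (restrictSupport R {α ∈ M | α.degree ≤ D * n}) :=
        Submodule.finrank_mono hmap
    _ = {α ∈ M | α.degree ≤ D * n}.ncard := finrank_restrictSupport _

lemma HSBound.natCard_le_of_algebraicIndependent {R σ ι : Type*} [CommRing R] [Nontrivial R]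
    [Finite σ] [Finite ι]
    {S : Subalgebra R (MvPolynomial σ R)} {M : Set (σ →₀ ℕ)}
    (hS : Subalgebra.toSubmodule S ≤ restrictSupport R M) {d : ℕ}
    (hd : HSBound (exponentCount M) d) {x : ι → S}
    (hx : AlgebraicIndependent R x) : Nat.card ι ≤ d := by
  obtain ⟨C, hC⟩ := hd.exists_sum_le
  obtain ⟨D, hD⟩ := exists_forall_succ_pow_le_ncard hS hx
  refine le_of_forall_succ_pow_le (D := D) (C := C) fun n ↦ ?_
  have hn := hC (D * n)
  rw [sum_exponentCount] at hn
  exact_mod_cast (Nat.cast_le.2 (hD n)).trans hn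

lemma HSBound.trdeg_le {R σ : Type*} [CommRing R] [Nontrivial R] [Finite σ]
    {S : Subalgebra R (MvPolynomial σ R)} {M : Set (σ →₀ ℕ)}
    (hS : Subalgebra.toSubmodule S ≤ restrictSupport R M) {d : ℕ}
    (hd : HSBound (exponentCount M) d) :
    Algebra.trdeg R S ≤ d := by
  refine ciSup_le' fun s ↦ Cardinal.mk_le_iff_forall_finset_subset_card_le.2 fun t hts ↦ ?_
  have := hd.natCard_le_of_algebraicIndependent hS (s.2.mono hts)
  simpa using this

/-! ### Graded pieces of monomial algebras -/

lemma exists_toSubmodule_adjoin_eq_restrictSupport {R σ : Type*} [CommSemiring R]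
    {G : Set (MvPolynomial σ R)} (hG : ∀ g ∈ G, ∃ α, g = monomial α 1) :
    ∃ M : Set (σ →₀ ℕ), Subalgebra.toSubmodule (Algebra.adjoin R G) = restrictSupport R M := by
  have hsub : G ⊆ MonoidHom.mrange (monomialOneHom R σ) := fun g hg ↦ by
    obtain ⟨α, rfl⟩ := hG g hg
    exact ⟨.ofAdd α, rfl⟩
  refine ⟨{α | monomial α 1 ∈ Submonoid.closure G}, ?_⟩
  rw [Algebra.adjoin_eq_span, restrictSupport_eq_span]
  congr 1
  ext p
  refine ⟨fun hp ↦ ?_, ?_⟩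
  · obtain ⟨α, rfl⟩ := Submonoid.closure_le.2 hsub hp
    exact ⟨α.toAdd, hp, rfl⟩
  · rintro ⟨α, hα, rfl⟩
    exact hα

lemma restrictSupport_inf_homogeneousSubmodule {R σ : Type*} [CommSemiring R]
    (M : Set (σ →₀ ℕ)) (m : ℕ) :
    restrictSupport R M ⊓ homogeneousSubmodule σ R m =
      restrictSupport R {α ∈ M | α.degree = m} := by
  rw [homogeneousSubmodule_eq_finsupp_supported]
  ext p
  exact Set.subset_inter_iff.symm

/-- The degree `m` piece of a monomial algebra has the monomials of degree `m` as a basis; this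
identifies it with the polynomials supported on those monomials. -/
noncomputable def gradedPieceEquiv {R σ : Type*} [CommSemiring R]
    {S : Subalgebra R (MvPolynomial σ R)} {M : Set (σ →₀ ℕ)}
    (hS : Subalgebra.toSubmodule S = restrictSupport R M) (m : ℕ) :
    (homogeneousSubmodule σ R m).comap S.val.toLinearMap ≃ₗ[R]
      restrictSupport R {α ∈ M | α.degree = m} :=
  (Submodule.equivSubtypeMap (Subalgebra.toSubmodule S)
    ((homogeneousSubmodule σ R m).comap S.val.toLinearMap)).trans
    (LinearEquiv.ofEq _ _ (by
      rw [← restrictSupport_inf_homogeneousSubmodule, ← hS]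
      exact Submodule.map_comap_subtype _ _))

lemma finite_gradedPiece {R σ : Type*} [CommSemiring R] [Finite σ]
    {S : Subalgebra R (MvPolynomial σ R)} {M : Set (σ →₀ ℕ)}
    (hS : Subalgebra.toSubmodule S = restrictSupport R M) (m : ℕ) :
    Module.Finite R ((homogeneousSubmodule σ R m).comap S.val.toLinearMap) := by
  have : Finite {α ∈ M | α.degree = m} :=
    (Finsupp.finite_of_degree_le m).subset fun _ h ↦ h.2.le
  have : Module.Finite R (restrictSupport R {α ∈ M | α.degree = m}) :=
    .of_basis (basisRestrictSupport R _)
  exact .equiv (gradedPieceEquiv hS m).symm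

lemma finrank_gradedPiece {R σ : Type*} [CommRing R] [Nontrivial R]
    {S : Subalgebra R (MvPolynomial σ R)} {M : Set (σ →₀ ℕ)}
    (hS : Subalgebra.toSubmodule S = restrictSupport R M) (m : ℕ) :
    Module.finrank R ((homogeneousSubmodule σ R m).comap S.val.toLinearMap) =
      exponentCount M m :=
  (gradedPieceEquiv hS m).finrank_eq.trans (finrank_restrictSupport _)

/-! ### The three dimensions -/

section Dimensions

variable {k σ : Type*} [Field k] [Finite σ] {S : Subalgebra k (MvPolynomial σ k)}
  {M : Set (σ →₀ ℕ)} (hS : Subalgebra.toSubmodule S = restrictSupport k M) {J : Set σ}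

lemma SeparatesExponents.hsBound_exponentCount (hJ : SeparatesExponents J M) :
    HSBound (exponentCount M) (Nat.card J) :=
  .of_sum_le (C := 1) fun n ↦ by
    rw [one_mul, sum_exponentCount]
    exact_mod_cast hJ.ncard_degree_le n

include hS in
lemma ringKrullDim_eq_natCard_of_minimal (hJ : Minimal (SeparatesExponents · M) J) :
    ringKrullDim S = Nat.card J :=
  le_antisymm ((ringKrullDim_le_toENat_trdeg k S).trans <| WithBot.coe_le_coe.2 <|
      Cardinal.toENat_le_natCast.2 <| hJ.prop.hsBound_exponentCount.trdeg_le hS.le)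
    (natCard_le_ringKrullDim_of_minimal hS.ge hJ)

include hS in
lemma trdeg_eq_natCard_of_minimal (hJ : Minimal (SeparatesExponents · M) J) :
    Algebra.trdeg k S = Nat.card J :=
  le_antisymm (hJ.prop.hsBound_exponentCount.trdeg_le hS.le) <| Cardinal.natCast_le_toENat.1 <|
    WithBot.coe_le_coe.1 <|
      (natCard_le_ringKrullDim_of_minimal hS.ge hJ).trans (ringKrullDim_le_toENat_trdeg k S)

include hS in
lemma isLeast_hsBound_natCard_of_minimal (hJ : Minimal (SeparatesExponents · M) J) :
    IsLeast {d | HSBound (exponentCount M) d} (Nat.card J) :=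
  ⟨hJ.prop.hsBound_exponentCount, fun _ hd ↦ Nat.cast_le.1 <|
    (trdeg_eq_natCard_of_minimal hS hJ).symm.trans_le (HSBound.trdeg_le hS.le hd)⟩

end Dimensions

/-- let `S` be a monomial algebra over a field `k`, i.e. a `k`-subalgebra
of `k[x₁,…,xₙ]` generated by a (possibly infinite) set of monomials, graded by
`S_m = S ∩ (homogeneous polynomials of degree m)`.  Then `S` is a Hilbert–Serre ring and
its Krull dimension, its transcendence degree over `k` and its Hilbert–Serre dimension
all coincide. -/
theorem monomial_algebra_dims (k : Type*) [Field k] (n : ℕ)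
    (G : Set (MvPolynomial (Fin n) k))
    (hG : ∀ g ∈ G, ∃ α : Fin n →₀ ℕ, g = MvPolynomial.monomial α 1)
    (S : Subalgebra k (MvPolynomial (Fin n) k)) (hS : S = Algebra.adjoin k G)
    (F : ℕ → ℕ)
    (hF : ∀ m, F m = Module.finrank k
      ↥((MvPolynomial.homogeneousSubmodule (Fin n) k m).comap S.val.toLinearMap)) :
    (∀ m, FiniteDimensional k
        ↥((MvPolynomial.homogeneousSubmodule (Fin n) k m).comap S.val.toLinearMap)) ∧
      (∃ d, HSBound F d) ∧
      ringKrullDim ↥S = ((sInf {d : ℕ | HSBound F d} : ℕ) : WithBot ℕ∞) ∧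
      trdeg k ↥S = ((sInf {d : ℕ | HSBound F d} : ℕ) : Cardinal) := by
  obtain ⟨M, hM⟩ := exists_toSubmodule_adjoin_eq_restrictSupport hG
  rw [← hS] at hM
  obtain ⟨J, hJ⟩ := exists_minimal_separatesExponents M
  have hFM : F = exponentCount M := by
    funext m
    rw [hF, finrank_gradedPiece hM]
  have hleast := isLeast_hsBound_natCard_of_minimal hM hJ
  rw [hFM, hleast.csInf_eq]
  exact ⟨finite_gradedPiece hM, ⟨_, hleast.1⟩,
    ringKrullDim_eq_natCard_of_minimal hM hJ, trdeg_eq_natCard_of_minimal hM hJ⟩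
end

section
/- Let k be a field, n ∈ ℕ, and let f₁,…,f_m ∈ k[x₁,…,xₙ] be homogeneous polynomials (each homogeneous of some total degree). Let S = Algebra.adjoin k {f₁,…,f_m} be the homogeneous subalgebra they generate, let ≺ be a monomial order on the monomials of k[x₁,…,xₙ] (a MonomialOrder on Fin n), and let in_≺(S) = Algebra.adjoin k { monomial (deg_≺ g) 1 | g ∈ S, g ≠ 0 } be the initial algebra of S, where deg_≺ g is the exponent of the ≺-leading monomial of g. Then the Krull dimension and the transcendence degree over k of S and of in_≺(S) coincide: ringKrullDim S = ringKrullDim (in_≺(S)) and Algebra.trdeg k S = Algebra.trdeg k (in_≺(S)). -/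
/-!
Polynomials whose leading exponents are linearly independent are algebraically independent: the
monomials in them have distinct leading exponents, so no cancellation of leading terms is possible.
The same holds over a coefficient subalgebra `A`, for exponents taken modulo the span of the
leading exponents of `A`. Applied to elements of `A` over `k`, and over `A` to the variables
completing that span to the whole space, this shows that `trdeg A` is the rank of the semigroup of
leading exponents of `A`. That semigroup is the same for `A` and for its initial algebra.

The initial algebra may fail to be Noetherian, but a domain `R` contained in a finitely generated
`k`-algebra `S` always has `dim R = trdeg R`. A chain of primes of `R` stays strict on a finitely
generated subalgebra, so `dim R ≤ trdeg R`. Conversely, dividing `S` by a closed point of the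
generic fibre of `Spec S → Spec R` makes `S` a domain algebraic over `R`; then `S[1/c]` is integral
over `R[1/c]` for some `c ≠ 0`, whence
`trdeg R ≤ trdeg S[1/c] = dim S[1/c] = dim R[1/c] ≤ dim R`.
-/

set_option maxHeartbeats 1000000
set_option synthInstance.maxHeartbeats 400000

open scoped MonomialOrder

/-- The `≺`-leading exponent of a multivariate polynomial `g` with respect to a monomial
order `m`: the `m`-largest exponent appearing in `g` (and `0` if `g = 0`). -/
noncomputable def mdeg {k : Type*} [Field k] {n : ℕ} (m : MonomialOrder (Fin n))
    (g : MvPolynomial (Fin n) k) : Fin n →₀ ℕ :=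
  m.toSyn.symm (g.support.sup m.toSyn)

section KrullDimension

variable {R S : Type*} [CommRing R] [CommRing S] [Algebra R S]

theorem ringKrullDim_eq_of_isIntegral [Algebra.IsIntegral R S] [FaithfulSMul R S] :
    ringKrullDim R = ringKrullDim S := by
  apply le_antisymm
  · refine iSup_le fun l => ?_
    obtain ⟨P, _, _⟩ := Ideal.nonempty_primesOver (S := S) l.head.asIdeal
    obtain ⟨L, hL, -⟩ := Ideal.exists_ltSeries_of_hasGoingUp l P
    exact hL ▸ Order.LTSeries.length_le_krullDim L
  · exact Order.krullDim_le_of_strictMono (PrimeSpectrum.comap (algebraMap R S)) fun P Q h =>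
      Ideal.IsIntegral.comap_lt_comap (R := R) (I := P.asIdeal) (J := Q.asIdeal) h

theorem ringKrullDim_le_of_isLocalization (M : Submonoid R) [IsLocalization M S] :
    ringKrullDim S ≤ ringKrullDim R :=
  Order.krullDim_le_of_strictMono (PrimeSpectrum.comap (algebraMap R S)) <|
    Monotone.strictMono_of_injective (fun _ _ h => Ideal.comap_mono h)
      (PrimeSpectrum.localization_comap_injective S M)

theorem exists_forall_isIntegral_pow_smul [IsDomain R] [Algebra.FiniteType R S]
    [Algebra.IsAlgebraic R S] : ∃ c : R, c ≠ 0 ∧ ∀ x : S, ∃ e : ℕ, IsIntegral R (c ^ e • x) := by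
  obtain ⟨s, hs⟩ := Algebra.FiniteType.out (R := R) (A := S)
  obtain ⟨c, hc, hint⟩ := Algebra.IsAlgebraic.exists_integral_multiples R s
  refine ⟨c, hc, fun x => ?_⟩
  have hx : x ∈ Algebra.adjoin R (s : Set S) := hs ▸ Algebra.mem_top
  induction hx using Algebra.adjoin_induction with
  | mem x hx => exact ⟨1, by simpa using hint x hx⟩
  | algebraMap r => exact ⟨0, by simpa using isIntegral_algebraMap⟩
  | add x y _ _ hx hy =>
    obtain ⟨i, hi⟩ := hx
    obtain ⟨j, hj⟩ := hy
    refine ⟨i + j, ?_⟩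
    convert (hi.smul (c ^ j)).add (hj.smul (c ^ i)) using 1
    rw [smul_smul, smul_smul, ← pow_add, ← pow_add, add_comm j, smul_add]
  | mul x y _ _ hx hy =>
    obtain ⟨i, hi⟩ := hx
    obtain ⟨j, hj⟩ := hy
    exact ⟨i + j, by rw [pow_add, ← smul_mul_smul_comm]; exact hi.mul hj⟩

theorem isIntegral_of_forall_isIntegral_smul (M : Submonoid R) {R' S' : Type*} [CommRing R']
    [CommRing S'] [Algebra R R'] [IsLocalization M R'] [Algebra S S'] [Algebra R S']
    [IsScalarTower R S S'] [IsLocalization (Algebra.algebraMapSubmonoid S M) S'] [Algebra R' S']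
    [IsScalarTower R R' S'] (h : ∀ x : S, ∃ c ∈ M, IsIntegral R (c • x)) :
    Algebra.IsIntegral R' S' := by
  have isIntegral_of_smul (c : M) (y : S') (hy : IsIntegral R' ((c : R) • y)) :
      IsIntegral R' y := by
    obtain ⟨u, hu⟩ := IsLocalization.map_units R' c
    rw [← algebraMap_smul R', ← hu] at hy
    simpa [← Units.smul_def] using hy.smul (↑u⁻¹ : R')
  refine ⟨fun y => ?_⟩
  obtain ⟨⟨x, ⟨_, d, hd, rfl⟩⟩, hxy⟩ := IsLocalization.surj (Algebra.algebraMapSubmonoid S M) y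
  obtain ⟨c, hc, hint⟩ := h x
  refine isIntegral_of_smul ⟨d, hd⟩ y (isIntegral_of_smul ⟨c, hc⟩ _ ?_)
  have : IsIntegral R' (algebraMap S S' (c • x)) :=
    (hint.map (IsScalarTower.toAlgHom R S S')).tower_top
  convert this using 1
  rw [Algebra.algebraMap_eq_smul_one, smul_assoc, ← Algebra.algebraMap_eq_smul_one, ← hxy]
  rw [Algebra.smul_def d, IsScalarTower.algebraMap_apply R S S', mul_comm]

theorem exists_isIntegral_localization [IsDomain R] [Algebra.FiniteType R S]
    [Algebra.IsAlgebraic R S] :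
    ∃ c : R, c ≠ 0 ∧ Algebra.IsIntegral (Localization (.powers c))
      (Localization (Algebra.algebraMapSubmonoid S (.powers c))) := by
  obtain ⟨c, hc, hint⟩ := exists_forall_isIntegral_pow_smul (R := R) (S := S)
  refine ⟨c, hc, isIntegral_of_forall_isIntegral_smul (S := S) (.powers c) fun x => ?_⟩
  obtain ⟨e, he⟩ := hint x
  exact ⟨c ^ e, ⟨e, rfl⟩, he⟩

theorem exists_isMaximal_isAlgebraic_quotient (K : Type*) {B : Type*} [Field K] [CommRing B]
    [Algebra K B] [Nontrivial B] [Algebra.FiniteType K B] :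
    ∃ P : Ideal B, P.IsMaximal ∧ Algebra.IsAlgebraic K (B ⧸ P) := by
  obtain ⟨P, hP⟩ := Ideal.exists_maximal B
  let := Ideal.Quotient.field P
  have := finite_of_finite_type_of_isJacobsonRing K (B ⧸ P)
  exact ⟨P, hP, Algebra.IsAlgebraic.of_finite K (B ⧸ P)⟩

open TensorProduct in
/-- Such a `Q` is a closed point of the generic fibre of `Spec S → Spec R`. -/
theorem exists_isPrime_isAlgebraic_quotient [IsDomain R] [Algebra.FiniteType R S]
    [FaithfulSMul R S] :
    ∃ Q : Ideal S, Q.IsPrime ∧ FaithfulSMul R (S ⧸ Q) ∧ Algebra.IsAlgebraic R (S ⧸ Q) := by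
  let K := FractionRing R
  have : Nontrivial (K ⊗[R] S) := (Algebra.TensorProduct.includeLeft_injective (S := K)
    (FaithfulSMul.algebraMap_injective R S)).nontrivial
  obtain ⟨P, _, _⟩ := exists_isMaximal_isAlgebraic_quotient K (B := K ⊗[R] S)
  let L := (K ⊗[R] S) ⧸ P
  have : Algebra.IsAlgebraic R K := IsLocalization.isAlgebraic K (nonZeroDivisors R)
  have : Algebra.IsAlgebraic R L := .trans R K L
  have hRL : Function.Injective (algebraMap R L) := by
    rw [IsScalarTower.algebraMap_eq R K L]
    exact (algebraMap K L).injective.comp (IsFractionRing.injective R K)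
  let φ : S →ₐ[R] L := (Ideal.Quotient.mkₐ R P).comp Algebra.TensorProduct.includeRight
  have hφ : Function.Injective (Ideal.kerLiftAlg φ) := φ.toRingHom.kerLift_injective
  refine ⟨RingHom.ker φ, RingHom.ker_isPrime φ, ?_, .of_injective _ hφ⟩
  refine (faithfulSMul_iff_algebraMap_injective _ _).mpr (.of_comp (f := Ideal.kerLiftAlg φ) ?_)
  rwa [← AlgHom.coe_toRingHom, ← RingHom.coe_comp, AlgHom.comp_algebraMap]

end KrullDimension

section TranscendenceDegree

theorem toENat_trdeg_le_of_injective {k R S : Type*} [CommRing k] [CommRing R] [CommRing S]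
    [Algebra k R] [Algebra k S] (f : R →ₐ[k] S) (hf : Function.Injective f) :
    (Algebra.trdeg k R).toENat ≤ (Algebra.trdeg k S).toENat := by
  simpa using Cardinal.toENat.monotone' (lift_trdeg_le_of_injective f hf)

variable (k : Type*) {R : Type*} [Field k] [CommRing R] [Algebra k R]

theorem ringKrullDim_eq_trdeg_of_finiteType [IsDomain R] [Algebra.FiniteType k R] :
    ringKrullDim R = (Algebra.trdeg k R).toENat := by
  obtain ⟨s, g, hg, hint⟩ := exists_integral_inj_algHom_of_fg k R
  algebraize [g.toRingHom]
  have : FaithfulSMul (MvPolynomial (Fin s) k) R :=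
    (faithfulSMul_iff_algebraMap_injective _ R).mpr hg
  have htrdeg : Algebra.trdeg k R = s := by
    simpa [trdeg_eq_zero (R := MvPolynomial (Fin s) k)] using
      (lift_trdeg_add_eq k (MvPolynomial (Fin s) k) R).symm
  simp [← ringKrullDim_eq_of_isIntegral (R := MvPolynomial (Fin s) k) (S := R), htrdeg]

theorem ringKrullDim_le_trdeg [IsDomain R] :
    ringKrullDim R ≤ (Algebra.trdeg k R).toENat := by
  refine iSup_le fun l => ?_
  have hl (i : Fin l.length) : (l i.castSucc).asIdeal < (l i.succ).asIdeal := l.step i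
  choose x hx_mem hx_notMem using fun i => (SetLike.lt_iff_le_and_exists.mp (hl i)).2
  let A := Algebra.adjoin k (Set.range x)
  have : Algebra.FiniteType k A :=
    A.fg_iff_finiteType.mp (Subalgebra.fg_def.mpr ⟨_, Set.finite_range x, rfl⟩)
  let L : LTSeries (PrimeSpectrum A) :=
    { length := l.length
      toFun i := PrimeSpectrum.comap (algebraMap A R) (l i)
      step i := SetLike.lt_iff_le_and_exists.mpr ⟨Ideal.comap_mono (hl i).le,
        ⟨x i, Algebra.subset_adjoin ⟨i, rfl⟩⟩, hx_mem i, hx_notMem i⟩ }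
  calc ((l.length : ℕ) : WithBot ℕ∞) ≤ ringKrullDim A := Order.LTSeries.length_le_krullDim L
    _ = (Algebra.trdeg k A).toENat := ringKrullDim_eq_trdeg_of_finiteType k
    _ ≤ (Algebra.trdeg k R).toENat :=
      WithBot.coe_le_coe.mpr (toENat_trdeg_le_of_injective A.val Subtype.val_injective)

variable (R) in
theorem trdeg_le_ringKrullDim_of_isAlgebraic (S : Type*) [CommRing S] [IsDomain S] [Algebra k S]
    [Algebra.FiniteType k S] [Algebra R S] [IsScalarTower k R S] [FaithfulSMul R S]
    [Algebra.IsAlgebraic R S] : (Algebra.trdeg k R).toENat ≤ ringKrullDim R := by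
  have hRS := FaithfulSMul.algebraMap_injective R S
  have : IsDomain R := hRS.isDomain
  have : Algebra.FiniteType R S := .of_restrictScalars_finiteType k R S
  obtain ⟨c, hc, _⟩ := exists_isIntegral_localization (R := R) (S := S)
  let M := Submonoid.powers c
  let R' := Localization M
  let S' := Localization (Algebra.algebraMapSubmonoid S M)
  have hMS : Algebra.algebraMapSubmonoid S M ≤ nonZeroDivisors S :=
    algebraMapSubmonoid_le_nonZeroDivisors_of_faithfulSMul S
      (powers_le_nonZeroDivisors_of_noZeroDivisors hc)
  have : IsDomain S' := IsLocalization.isDomain_localization hMS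
  have : FaithfulSMul R' S' := (faithfulSMul_iff_algebraMap_injective R' S').mpr
    (localizationAlgebra_injective (M := M) R' S' hRS)
  have : Monoid.FG (Algebra.algebraMapSubmonoid S M) := (Monoid.fg_iff_submonoid_fg _).mpr
    (((Monoid.fg_iff_submonoid_fg M).mp inferInstance).map _)
  have : Algebra.FiniteType S S' :=
    IsLocalization.finiteType_of_monoid_fg (Algebra.algebraMapSubmonoid S M) S'
  have : Algebra.FiniteType k S' := .trans (S := S) ‹_› ‹_›
  have hRS' : Function.Injective (algebraMap R S') := by
    rw [IsScalarTower.algebraMap_eq R S S']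
    exact (IsLocalization.injective S' hMS).comp hRS
  calc
    ((Algebra.trdeg k R).toENat : WithBot ℕ∞) ≤ (Algebra.trdeg k S').toENat :=
      WithBot.coe_le_coe.mpr (toENat_trdeg_le_of_injective (IsScalarTower.toAlgHom k R S') hRS')
    _ = ringKrullDim S' := (ringKrullDim_eq_trdeg_of_finiteType k).symm
    _ = ringKrullDim R' := ringKrullDim_eq_of_isIntegral.symm
    _ ≤ ringKrullDim R := ringKrullDim_le_of_isLocalization M

variable (R) in
theorem ringKrullDim_eq_trdeg_of_faithfulSMul_finiteType (S : Type*) [IsDomain R] [CommRing S]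
    [Algebra k S] [Algebra R S] [IsScalarTower k R S] [FaithfulSMul R S] [Algebra.FiniteType k S] :
    ringKrullDim R = (Algebra.trdeg k R).toENat := by
  have : Algebra.FiniteType R S := .of_restrictScalars_finiteType k R S
  obtain ⟨Q, _, _, _⟩ := exists_isPrime_isAlgebraic_quotient (R := R) (S := S)
  exact (ringKrullDim_le_trdeg k).antisymm (trdeg_le_ringKrullDim_of_isAlgebraic k R (S ⧸ Q))

end TranscendenceDegree

section InitialAlgebra

open MvPolynomial

theorem exists_linearIndependent_mkQ_basis {ι K V : Type*} [DivisionRing K] [AddCommGroup V]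
    [Module K V] [Module.Finite K V] (b : Module.Basis ι K V) (W : Submodule K V) :
    ∃ J : Set ι, LinearIndependent K (fun j : J => W.mkQ (b j)) ∧
      J.ncard + Module.finrank K W = Module.finrank K V := by
  obtain ⟨κ, a, ha, hspan, hli⟩ := exists_linearIndependent' K (W.mkQ ∘ b)
  have := hli.finite
  have := Fintype.ofFinite κ
  refine ⟨Set.range a, (linearIndependent_equiv (Equiv.ofInjective a ha)).mp hli, ?_⟩
  rw [Set.range_comp W.mkQ b, ← Submodule.map_span, b.span_eq, Submodule.map_top,
    Submodule.range_mkQ] at hspan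
  rw [← W.finrank_quotient_add_finrank, ← finrank_top K (V ⧸ W), ← hspan,
    finrank_span_eq_card hli, ← Nat.card_coe_set_eq, Nat.card_range_of_injective ha,
    Nat.card_eq_fintype_card]

theorem sum_ne_zero_of_injOn_degree {σ R ι : Type*} [CommSemiring R] {m : MonomialOrder σ}
    {s : Finset ι} {v : ι → MvPolynomial σ R} (hs : s.Nonempty) (hv : ∀ i ∈ s, v i ≠ 0)
    (hinj : Set.InjOn (fun i => m.degree (v i)) s) :
    ∑ i ∈ s, v i ≠ 0 := by
  obtain ⟨i, hi, hmax⟩ := s.exists_max_image (fun i => m.toSyn (m.degree (v i))) hs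
  suffices h : coeff (m.degree (v i)) (∑ j ∈ s, v j) = m.leadingCoeff (v i) by
    intro h0
    rw [h0, coeff_zero] at h
    exact m.leadingCoeff_ne_zero_iff.mpr (hv i hi) h.symm
  rw [coeff_sum, Finset.sum_eq_single_of_mem i hi, MonomialOrder.leadingCoeff]
  intro j hj hji
  refine m.coeff_eq_zero_of_lt ((hmax j hj).lt_of_ne fun h => hji ?_)
  exact hinj hj hi (m.toSyn.injective h)

universe u v

variable {σ : Type u} {k : Type v} [CommRing k] [IsDomain k] (m : MonomialOrder σ)

/-- The semigroup of `m`-leading exponents of the nonzero elements of a subalgebra `A`. -/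
def leadingExponents (A : Subalgebra k (MvPolynomial σ k)) : AddSubmonoid (σ →₀ ℕ) where
  carrier := {a | ∃ g ∈ A, g ≠ 0 ∧ m.degree g = a}
  zero_mem' := ⟨1, A.one_mem, one_ne_zero, m.degree_one⟩
  add_mem' := by
    rintro _ _ ⟨g, hg, hg0, rfl⟩ ⟨h, hh, hh0, rfl⟩
    exact ⟨g * h, A.mul_mem hg hh, mul_ne_zero hg0 hh0, m.degree_mul hg0 hh0⟩

/-- The initial algebra of a subalgebra `A`: the subalgebra generated by the `m`-leading monomials
of the nonzero elements of `A`. -/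
noncomputable def initialAlgebra (A : Subalgebra k (MvPolynomial σ k)) :
    Subalgebra k (MvPolynomial σ k) :=
  Algebra.adjoin k {p | ∃ g ∈ A, g ≠ 0 ∧ p = monomial (m.degree g) 1}

variable {m}

theorem support_subset_leadingExponents {A : Subalgebra k (MvPolynomial σ k)}
    {p : MvPolynomial σ k} (hp : p ∈ initialAlgebra m A) :
    (p.support : Set (σ →₀ ℕ)) ⊆ leadingExponents m A := by
  classical
  induction hp using Algebra.adjoin_induction with
  | mem p hp =>
    obtain ⟨g, hg, hg0, rfl⟩ := hp
    refine fun a ha => ?_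
    rw [Finset.mem_singleton.mp (support_monomial_subset ha)]
    exact ⟨g, hg, hg0, rfl⟩
  | algebraMap r =>
    refine fun a ha => ?_
    rw [Finset.mem_singleton.mp (support_monomial_subset ha)]
    exact zero_mem _
  | add p q _ _ hp hq =>
    exact fun a ha => (Finset.mem_union.mp (support_add ha)).elim (@hp a) (@hq a)
  | mul p q _ _ hp hq =>
    refine fun a ha => ?_
    obtain ⟨b, hb, c, hc, rfl⟩ := Finset.mem_add.mp (support_mul p q ha)
    exact add_mem (hp hb) (hq hc)

variable (m) in
theorem leadingExponents_initialAlgebra (A : Subalgebra k (MvPolynomial σ k)) :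
    leadingExponents m (initialAlgebra m A) = leadingExponents m A := by
  apply le_antisymm
  · rintro _ ⟨p, hp, hp0, rfl⟩
    exact support_subset_leadingExponents hp (m.degree_mem_support hp0)
  · rintro _ ⟨g, hg, hg0, rfl⟩
    classical
    refine ⟨monomial (m.degree g) 1, Algebra.subset_adjoin ⟨g, hg, hg0, rfl⟩, by simp, ?_⟩
    rw [m.degree_monomial, if_neg one_ne_zero]

/-- The embedding of exponents into the `ℚ`-vector space they span. -/
noncomputable def ratExponent : (σ →₀ ℕ) →+ (σ →₀ ℚ) :=
  Finsupp.mapRange.addMonoidHom (Nat.castAddMonoidHom ℚ)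

variable (m) in
/-- The `ℚ`-vector space spanned by the leading exponents of the nonzero elements of `A`. -/
noncomputable def exponentSpan (A : Subalgebra k (MvPolynomial σ k)) :
    Submodule ℚ (σ →₀ ℚ) :=
  .span ℚ (ratExponent '' leadingExponents m A)

theorem ratExponent_degree_mem_exponentSpan {A : Subalgebra k (MvPolynomial σ k)}
    {g : MvPolynomial σ k} (hg : g ∈ A) : ratExponent (m.degree g) ∈ exponentSpan m A := by
  obtain rfl | hg0 := eq_or_ne g 0
  · simp
  · exact Submodule.subset_span ⟨_, ⟨g, hg, hg0, rfl⟩, rfl⟩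

theorem map_degree_algebraMap_mul_prod_pow {R ι M : Type*} [CommRing R]
    [Algebra R (MvPolynomial σ k)] [FaithfulSMul R (MvPolynomial σ k)] [AddCommMonoid M]
    (χ : (σ →₀ ℕ) →+ M) (hχ : ∀ r : R, χ (m.degree (algebraMap R (MvPolynomial σ k) r)) = 0)
    {g : ι → MvPolynomial σ k} (hg : ∀ i, g i ≠ 0) {r : R} (hr : r ≠ 0) (c : ι →₀ ℕ) :
    χ (m.degree (algebraMap R (MvPolynomial σ k) r * ∏ i ∈ c.support, g i ^ c i)) =
      Finsupp.linearCombination ℕ (fun i => χ (m.degree (g i))) c := by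
  have hpow (i : ι) : g i ^ c i ≠ 0 := pow_ne_zero _ (hg i)
  rw [m.degree_mul (by simpa using hr) (Finset.prod_ne_zero_iff.mpr fun i _ => hpow i),
    m.degree_prod fun i _ => hpow i, map_add, hχ, zero_add, map_sum,
    Finsupp.linearCombination_apply, Finsupp.sum]
  simp only [m.degree_pow, map_nsmul]

theorem algebraicIndependent_of_linearIndependent_degree {R ι M : Type*} [CommRing R]
    [Algebra R (MvPolynomial σ k)] [FaithfulSMul R (MvPolynomial σ k)] [AddCommMonoid M]
    (χ : (σ →₀ ℕ) →+ M) (hχ : ∀ r : R, χ (m.degree (algebraMap R (MvPolynomial σ k) r)) = 0)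
    {g : ι → MvPolynomial σ k} (hg : LinearIndependent ℕ fun i => χ (m.degree (g i))) :
    AlgebraicIndependent R g := by
  have hg0 (i : ι) : g i ≠ 0 := fun h => hg.ne_zero i (by simp [h])
  rw [algebraicIndependent_iff]
  intro p hp
  by_contra hp0
  rw [aeval_def, eval₂_eq] at hp
  refine sum_ne_zero_of_injOn_degree (m := m) (support_nonempty.mpr hp0) (fun c hc => ?_) ?_ hp
  · exact mul_ne_zero (by simpa using hc)
      (Finset.prod_ne_zero_iff.mpr fun i _ => pow_ne_zero _ (hg0 i))
  · intro c hc d hd hcd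
    have := congrArg χ hcd
    simp only [map_degree_algebraMap_mul_prod_pow χ hχ hg0 (mem_support_iff.mp hc),
      map_degree_algebraMap_mul_prod_pow χ hχ hg0 (mem_support_iff.mp hd)] at this
    exact hg this

theorem finrank_exponentSpan_le_trdeg [Finite σ] (A : Subalgebra k (MvPolynomial σ k)) :
    Module.finrank ℚ (exponentSpan m A) ≤ Algebra.trdeg k A := by
  obtain ⟨b, hb, hspan, hli⟩ :=
    exists_linearIndependent ℚ (ratExponent '' (leadingExponents m A : Set (σ →₀ ℕ)))
  have (x : b) : ∃ g ∈ A, ratExponent (m.degree g) = x := by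
    obtain ⟨_, ⟨g, hg, -, rfl⟩, hx⟩ := hb x.2
    exact ⟨g, hg, hx⟩
  choose g hgA hg using this
  have hind : AlgebraicIndependent k g := by
    refine algebraicIndependent_of_linearIndependent_degree (m := m) ratExponent
      (fun r => by simp [algebraMap_eq]) ?_
    simpa only [hg] using hli.restrict_scalars (R := ℕ) fun a b h => by simpa using h
  have hindA : AlgebraicIndependent k fun x => (⟨g x, hgA x⟩ : A) := .of_comp A.val hind
  have := hli.finite
  have := Fintype.ofFinite b
  rw [exponentSpan, ← hspan, finrank_span_set_eq_card hli, Set.toFinset_card]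
  simpa using hindA.lift_cardinalMk_le_trdeg

theorem trdeg_le_finrank_exponentSpan [Finite σ] (A : Subalgebra k (MvPolynomial σ k)) :
    Algebra.trdeg k A ≤ Module.finrank ℚ (exponentSpan m A) := by
  obtain ⟨J, hli, hJ⟩ :=
    exists_linearIndependent_mkQ_basis Finsupp.basisSingleOne (exponentSpan m A)
  have hind : AlgebraicIndependent A fun j : J => (X (j : σ) : MvPolynomial σ k) := by
    refine algebraicIndependent_of_linearIndependent_degree (m := m)
      ((exponentSpan m A).mkQ.toAddMonoidHom.comp ratExponent) (fun a => ?_) ?_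
    · exact (Submodule.Quotient.mk_eq_zero _).mpr (ratExponent_degree_mem_exponentSpan a.2)
    · simpa [m.degree_X, ratExponent] using
        hli.restrict_scalars (R := ℕ) fun a b h => by simpa using h
  have hJ_le : (J.ncard : Cardinal) ≤ Algebra.trdeg A (MvPolynomial σ k) := by
    have := hind.lift_cardinalMk_le_trdeg
    rwa [← Set.cast_ncard J.toFinite, Cardinal.lift_natCast, Cardinal.lift_id'.{u, max u v}] at this
  have hadd : Algebra.trdeg k A + Algebra.trdeg A (MvPolynomial σ k) = Nat.card σ := by
    have := lift_trdeg_add_eq k A (MvPolynomial σ k)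
    simpa [← Nat.cast_card (α := σ)] using this
  rw [← Cardinal.add_le_add_iff_of_lt_aleph0 (Cardinal.natCast_lt_aleph0 (n := J.ncard))]
  calc Algebra.trdeg k A + J.ncard ≤ Nat.card σ := hadd ▸ add_le_add_right hJ_le _
    _ = Module.finrank ℚ (exponentSpan m A) + J.ncard := by
      rw [add_comm, ← Nat.cast_add, hJ, Module.finrank_eq_nat_card_basis Finsupp.basisSingleOne]

variable (m)

theorem trdeg_eq_finrank_exponentSpan [Finite σ] (A : Subalgebra k (MvPolynomial σ k)) :
    Algebra.trdeg k A = Module.finrank ℚ (exponentSpan m A) :=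
  (trdeg_le_finrank_exponentSpan A).antisymm (finrank_exponentSpan_le_trdeg A)

theorem trdeg_initialAlgebra [Finite σ] (A : Subalgebra k (MvPolynomial σ k)) :
    Algebra.trdeg k (initialAlgebra m A) = Algebra.trdeg k A := by
  rw [trdeg_eq_finrank_exponentSpan m, trdeg_eq_finrank_exponentSpan m, exponentSpan,
    leadingExponents_initialAlgebra, exponentSpan]

end InitialAlgebra

theorem initial_algebra_dims_general {σ k : Type*} [Finite σ] [Field k] (m : MonomialOrder σ)
    (S : Subalgebra k (MvPolynomial σ k)) :
    ringKrullDim S = ringKrullDim (initialAlgebra m S) ∧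
      Algebra.trdeg k S = Algebra.trdeg k (initialAlgebra m S) := by
  refine ⟨?_, (trdeg_initialAlgebra m S).symm⟩
  rw [ringKrullDim_eq_trdeg_of_faithfulSMul_finiteType k S (MvPolynomial σ k),
    ringKrullDim_eq_trdeg_of_faithfulSMul_finiteType k (initialAlgebra m S) (MvPolynomial σ k),
    trdeg_initialAlgebra]

/-- let `S = k[f₁,…,f_N]` be a subalgebra of `k[x₁,…,xₙ]` generated by
homogeneous polynomials, `≺` a monomial order, and `in_≺(S)` the initial algebra of `S`,
generated by the leading monomials of the nonzero elements of `S`.  Then `S` and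
`in_≺(S)` have the same Krull dimension and the same transcendence degree over `k`. -/
theorem initial_algebra_dims (k : Type*) [Field k] (n N : ℕ)
    (f : Fin N → MvPolynomial (Fin n) k)
    (hf : ∀ i, ∃ d : ℕ, (f i).IsHomogeneous d)
    (m : MonomialOrder (Fin n))
    (S inS : Subalgebra k (MvPolynomial (Fin n) k))
    (hS : S = Algebra.adjoin k (Set.range f))
    (hinS : inS = Algebra.adjoin k
      {p : MvPolynomial (Fin n) k | ∃ g ∈ S, g ≠ 0 ∧ p = MvPolynomial.monomial (mdeg m g) 1}) :
    ringKrullDim ↥S = ringKrullDim ↥inS ∧ trdeg k ↥S = trdeg k ↥inS := by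
  subst hinS
  exact initial_algebra_dims_general m S
end
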